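/- For every probability distribution P_XY on 𝒳×𝒴, the function θ ↦ H↑_{1+θ}(X|Y), extended at θ=0 by the value H(X|Y), is non-increasing on (−1,∞). -/

import Mathlib

open Real Filter

/-- Marginal distribution on `𝒴`. -/
noncomputable def margY {𝒳 𝒴 : Type*} [Fintype 𝒳] (P : 𝒳 × 𝒴 → ℝ) (y : 𝒴) : ℝ :=
  ∑ x : 𝒳, P (x, y)

/-- Upper conditional Rényi entropy `H↑_{1+θ}(X|Y)`. -/
noncomputable def condRenyiUp {𝒳 𝒴 : Type*} [Fintype 𝒳] [Fintype 𝒴]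
    (P : 𝒳 × 𝒴 → ℝ) (θ : ℝ) : ℝ :=
  -((1 + θ) / θ) * Real.log (∑ y : 𝒴, (∑ x : 𝒳, P (x, y) ^ (1 + θ)) ^ (1 / (1 + θ)))

/-- Conditional entropy `H(X|Y)`. -/
noncomputable def condEnt {𝒳 𝒴 : Type*} [Fintype 𝒳] [Fintype 𝒴]
    (P : 𝒳 × 𝒴 → ℝ) : ℝ :=
  -∑ x : 𝒳, ∑ y : 𝒴,
    if 0 < P (x, y) then P (x, y) * Real.log (P (x, y) / margY P y) else 0

/-
With the reciprocal exponent `r = 1 / (1 + θ)`, the entropy `H↑_{1+θ}(X|Y)` is the slope between `1`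
and `r` of `Φ r = log ∑ y, ‖P(·, y)‖_{1/r}`, which vanishes at `1`. Two applications of Hölder's
inequality show that `Φ` is convex, so its slopes at `1` increase with `r`, that is, decrease
with `θ`. Two applications of Jensen's inequality to `exp` give `Φ r ≥ (r - 1) H(X|Y)`: the value
`H(X|Y)` is a subgradient of `Φ` at `1`, and so it separates the slopes on the left of `1` from
those on the right.
-/

section Convexity

theorem monotoneOn_update_slope_of_convexOn {𝕜 : Type*} [Field 𝕜] [LinearOrder 𝕜]
    [IsStrictOrderedRing 𝕜] {s : Set 𝕜} {f : 𝕜 → 𝕜} {a m : 𝕜} (hf : ConvexOn 𝕜 s f) (ha : a ∈ s)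
    (hm : ∀ x ∈ s, f a + m * (x - a) ≤ f x) :
    MonotoneOn (Function.update (slope f a) a m) s := by
  have slope_le : ∀ x ∈ s, x < a → slope f a x ≤ m := fun x hx hxa ↦ by
    rw [slope_def_field, div_le_iff_of_neg (sub_neg.2 hxa)]
    linarith [hm x hx]
  have le_slope : ∀ x ∈ s, a < x → m ≤ slope f a x := fun x hx hax ↦ by
    rw [slope_def_field, le_div_iff₀ (sub_pos.2 hax)]
    linarith [hm x hx]
  intro x hx y hy hxy
  rcases hxy.eq_or_lt with rfl | hlt
  · exact le_rfl
  rcases eq_or_ne x a with rfl | hxa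
  · simpa [hlt.ne'] using le_slope y hy hlt
  rcases eq_or_ne y a with rfl | hya
  · simpa [hxa] using slope_le x hx hlt
  · simpa [hxa, hya] using hf.slope_mono ha ⟨hx, hxa⟩ ⟨hy, hya⟩ hxy

theorem convexOn_log_of_le_rpow_mul_rpow {E : Type*} [AddCommGroup E] [Module ℝ E] {s : Set E}
    {G : E → ℝ} (hs : Convex ℝ s) (hG : ∀ x ∈ s, 0 < G x)
    (hmul : ∀ x ∈ s, ∀ y ∈ s, ∀ a b : ℝ, 0 < a → 0 < b → a + b = 1 →
      G (a • x + b • y) ≤ G x ^ a * G y ^ b) :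
    ConvexOn ℝ s fun x ↦ log (G x) := by
  refine convexOn_iff_forall_pos.2 ⟨hs, fun x hx y hy a b ha hb hab ↦ ?_⟩
  calc log (G (a • x + b • y))
      ≤ log (G x ^ a * G y ^ b) :=
        log_le_log (hG _ (hs hx hy ha.le hb.le hab)) (hmul x hx y hy a b ha hb hab)
    _ = a • log (G x) + b • log (G y) := by
        rw [log_mul (rpow_pos_of_pos (hG x hx) a).ne' (rpow_pos_of_pos (hG y hy) b).ne',
          log_rpow (hG x hx), log_rpow (hG y hy), smul_eq_mul, smul_eq_mul]

end Convexity

section RecipLpNorm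

variable {ι : Type*} [Fintype ι] {f g p : ι → ℝ} {r : ℝ}

/-- The `ℓ^{1/r}` (quasi-)norm of a nonnegative function, as a function of the reciprocal `r` of
the exponent: in this parametrization it is log-convex. -/
noncomputable def recipLpNorm (f : ι → ℝ) (r : ℝ) : ℝ :=
  (∑ i, f i ^ r⁻¹) ^ r

theorem recipLpNorm_one (f : ι → ℝ) : recipLpNorm f 1 = ∑ i, f i := by
  simp [recipLpNorm]

theorem recipLpNorm_nonneg (hf : ∀ i, 0 ≤ f i) (r : ℝ) : 0 ≤ recipLpNorm f r :=
  rpow_nonneg (Finset.sum_nonneg fun i _ ↦ rpow_nonneg (hf i) _) _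

theorem recipLpNorm_const_mul {c : ℝ} (hc : 0 ≤ c) (hf : ∀ i, 0 ≤ f i) (hr : r ≠ 0) :
    recipLpNorm (fun i ↦ c * f i) r = c * recipLpNorm f r := by
  simp only [recipLpNorm, mul_rpow hc (hf _), ← Finset.mul_sum]
  rw [mul_rpow (rpow_nonneg hc _) (Finset.sum_nonneg fun i _ ↦ rpow_nonneg (hf i) _),
    rpow_inv_rpow hc hr]

theorem recipLpNorm_rpow_mul_rpow_le (hf : ∀ i, 0 ≤ f i) (hg : ∀ i, 0 ≤ g i) {a b s t : ℝ}
    (ha : 0 < a) (hb : 0 < b) (hs : 0 < s) (ht : 0 < t) :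
    recipLpNorm (fun i ↦ f i ^ a * g i ^ b) (a * s + b * t) ≤
      recipLpNorm f s ^ a * recipLpNorm g t ^ b := by
  have hr : 0 < a * s + b * t := by positivity
  have hsum_nonneg : ∀ {h : ι → ℝ} (c : ℝ), (∀ i, 0 ≤ h i) → 0 ≤ ∑ i, h i ^ c :=
    fun c hh ↦ Finset.sum_nonneg fun i _ ↦ rpow_nonneg (hh i) c
  have rpow_rpow_inv_mul : ∀ {x c d : ℝ}, 0 ≤ x → 0 < c → (x ^ c) ^ (c * d)⁻¹ = x ^ d⁻¹ :=
    fun hx hc ↦ by rw [← rpow_mul hx, mul_inv, mul_inv_cancel_left₀ hc.ne']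
  have holder := Lr_rpow_le_Lp_mul_Lq_of_nonneg Finset.univ
    (f := fun i ↦ f i ^ a) (g := fun i ↦ g i ^ b)
    (p := (a * s)⁻¹) (q := (b * t)⁻¹) (r := (a * s + b * t)⁻¹)
    ⟨by simp only [inv_inv], by positivity, by positivity⟩
    (fun i _ ↦ rpow_nonneg (hf i) a) (fun i _ ↦ rpow_nonneg (hg i) b)
  simp only [rpow_rpow_inv_mul (hf _) ha, rpow_rpow_inv_mul (hg _) hb] at holder
  calc recipLpNorm (fun i ↦ f i ^ a * g i ^ b) (a * s + b * t)
      ≤ ((∑ i, f i ^ s⁻¹) ^ ((a * s + b * t)⁻¹ / (a * s)⁻¹) *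
          (∑ i, g i ^ t⁻¹) ^ ((a * s + b * t)⁻¹ / (b * t)⁻¹)) ^ (a * s + b * t) :=
        rpow_le_rpow (hsum_nonneg _ fun i ↦ mul_nonneg (rpow_nonneg (hf i) a)
          (rpow_nonneg (hg i) b)) holder hr.le
    _ = recipLpNorm f s ^ a * recipLpNorm g t ^ b := by
        rw [mul_rpow (rpow_nonneg (hsum_nonneg _ hf) _) (rpow_nonneg (hsum_nonneg _ hg) _),
          recipLpNorm, recipLpNorm, ← rpow_mul (hsum_nonneg _ hf), ← rpow_mul (hsum_nonneg _ hg),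
          ← rpow_mul (hsum_nonneg _ hf), ← rpow_mul (hsum_nonneg _ hg)]
        congr 2 <;> field_simp

theorem sum_rpow_mul_rpow_le (hf : ∀ i, 0 ≤ f i) (hg : ∀ i, 0 ≤ g i) {a b : ℝ}
    (ha : 0 < a) (hb : 0 < b) (hab : a + b = 1) :
    ∑ i, f i ^ a * g i ^ b ≤ (∑ i, f i) ^ a * (∑ i, g i) ^ b := by
  simpa only [mul_one, hab, recipLpNorm_one] using
    recipLpNorm_rpow_mul_rpow_le hf hg ha hb one_pos one_pos

theorem recipLpNorm_add_le (hf : ∀ i, 0 ≤ f i) {a b s t : ℝ} (ha : 0 < a) (hb : 0 < b)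
    (hab : a + b = 1) (hs : 0 < s) (ht : 0 < t) :
    recipLpNorm f (a * s + b * t) ≤ recipLpNorm f s ^ a * recipLpNorm f t ^ b := by
  simpa only [← rpow_add_of_nonneg (hf _) ha.le hb.le, hab, rpow_one] using
    recipLpNorm_rpow_mul_rpow_le hf hf ha hb hs ht

/-- The Shannon entropy, in nats, of a probability vector. -/
noncomputable def shannonEntropy (p : ι → ℝ) : ℝ :=
  ∑ i, negMulLog (p i)

theorem exp_mul_shannonEntropy_le_recipLpNorm (hp : ∀ i, 0 ≤ p i) (hp1 : ∑ i, p i = 1)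
    (hr : 0 < r) : exp ((r - 1) * shannonEntropy p) ≤ recipLpNorm p r := by
  have mul_exp_log : ∀ i, p i * exp ((r⁻¹ - 1) * log (p i)) = p i ^ r⁻¹ := fun i ↦ by
    rcases (hp i).eq_or_lt with h | h
    · rw [← h, zero_mul, zero_rpow (inv_ne_zero hr.ne')]
    · rw [mul_comm (r⁻¹ - 1), ← rpow_def_of_pos h, rpow_sub_one h.ne', mul_div_cancel₀ _ h.ne']
  have jensen : exp (∑ i, p i * ((r⁻¹ - 1) * log (p i))) ≤ ∑ i, p i ^ r⁻¹ := by
    simpa only [smul_eq_mul, mul_exp_log] using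
      convexOn_exp.map_sum_le (p := fun i ↦ (r⁻¹ - 1) * log (p i)) (fun i _ ↦ hp i) hp1
        fun i _ ↦ Set.mem_univ _
  calc exp ((r - 1) * shannonEntropy p)
      = exp (∑ i, p i * ((r⁻¹ - 1) * log (p i))) ^ r := by
        rw [← exp_mul, shannonEntropy, Finset.mul_sum, Finset.sum_mul]
        congr 1
        refine Finset.sum_congr rfl fun i _ ↦ ?_
        rw [negMulLog]
        field_simp
        ring
    _ ≤ recipLpNorm p r := rpow_le_rpow (exp_pos _).le jensen hr.le

end RecipLpNorm

section JointDistribution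

variable {𝒳 𝒴 : Type*} [Fintype 𝒳] {P : 𝒳 × 𝒴 → ℝ} {r : ℝ}

theorem margY_nonneg (hP : ∀ q, 0 ≤ P q) (y : 𝒴) : 0 ≤ margY P y :=
  Finset.sum_nonneg fun x _ ↦ hP (x, y)

theorem le_margY (hP : ∀ q, 0 ≤ P q) (x : 𝒳) (y : 𝒴) : P (x, y) ≤ margY P y :=
  Finset.single_le_sum (f := fun x ↦ P (x, y)) (fun x _ ↦ hP (x, y)) (Finset.mem_univ x)

theorem margY_mul_exp_le_recipLpNorm (hP : ∀ q, 0 ≤ P q) (hr : 0 < r) (y : 𝒴) :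
    margY P y * exp ((r - 1) * shannonEntropy fun x ↦ P (x, y) / margY P y) ≤
      recipLpNorm (fun x ↦ P (x, y)) r := by
  rcases (margY_nonneg hP y).eq_or_lt with hy | hy
  · rw [← hy, zero_mul]
    exact recipLpNorm_nonneg (fun x ↦ hP (x, y)) r
  have hcond : ∀ x, 0 ≤ P (x, y) / margY P y := fun x ↦ div_nonneg (hP (x, y)) hy.le
  have hcond_sum : ∑ x, P (x, y) / margY P y = 1 := by
    rw [← Finset.sum_div]
    exact div_self hy.ne'
  calc margY P y * exp ((r - 1) * shannonEntropy fun x ↦ P (x, y) / margY P y)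
      ≤ margY P y * recipLpNorm (fun x ↦ P (x, y) / margY P y) r :=
        mul_le_mul_of_nonneg_left (exp_mul_shannonEntropy_le_recipLpNorm hcond hcond_sum hr) hy.le
    _ = recipLpNorm (fun x ↦ P (x, y)) r := by
        rw [← recipLpNorm_const_mul hy.le hcond hr.ne']
        simp only [mul_div_cancel₀ _ hy.ne']

variable [Fintype 𝒴]

theorem sum_margY (P : 𝒳 × 𝒴 → ℝ) : ∑ y, margY P y = ∑ q, P q :=
  (Fintype.sum_prod_type_right P).symm

theorem condEnt_eq_sum_margY_mul_shannonEntropy (hP : ∀ q, 0 ≤ P q) :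
    condEnt P = ∑ y, margY P y * shannonEntropy fun x ↦ P (x, y) / margY P y := by
  simp only [condEnt, shannonEntropy, Finset.mul_sum, ← Finset.sum_neg_distrib]
  rw [Finset.sum_comm]
  refine Finset.sum_congr rfl fun y _ ↦ Finset.sum_congr rfl fun x _ ↦ ?_
  rcases (hP (x, y)).eq_or_lt with h | h
  · simp [← h]
  · have hy : margY P y ≠ 0 := (h.trans_le (le_margY hP x y)).ne'
    rw [if_pos h, negMulLog]
    field_simp

/-- The quantity `∑ y, ‖P(·, y)‖_{1/r}` whose logarithm gives the upper conditional Rényi entropy of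
order `1/r`. -/
noncomputable def sumRecipLpNorm (P : 𝒳 × 𝒴 → ℝ) (r : ℝ) : ℝ :=
  ∑ y, recipLpNorm (fun x ↦ P (x, y)) r

theorem sumRecipLpNorm_one (P : 𝒳 × 𝒴 → ℝ) : sumRecipLpNorm P 1 = ∑ q, P q := by
  simp only [sumRecipLpNorm, recipLpNorm_one, Fintype.sum_prod_type_right]

theorem sumRecipLpNorm_add_le (hP : ∀ q, 0 ≤ P q) {a b s t : ℝ} (ha : 0 < a) (hb : 0 < b)
    (hab : a + b = 1) (hs : 0 < s) (ht : 0 < t) :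
    sumRecipLpNorm P (a * s + b * t) ≤ sumRecipLpNorm P s ^ a * sumRecipLpNorm P t ^ b :=
  (Finset.sum_le_sum fun y _ ↦ recipLpNorm_add_le (fun x ↦ hP (x, y)) ha hb hab hs ht).trans
    (sum_rpow_mul_rpow_le (fun y ↦ recipLpNorm_nonneg (fun x ↦ hP (x, y)) s)
      (fun y ↦ recipLpNorm_nonneg (fun x ↦ hP (x, y)) t) ha hb hab)

theorem exp_mul_condEnt_le_sumRecipLpNorm (hP : ∀ q, 0 ≤ P q) (hP1 : ∑ q, P q = 1) (hr : 0 < r) :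
    exp ((r - 1) * condEnt P) ≤ sumRecipLpNorm P r := by
  have jensen := convexOn_exp.map_sum_le (t := Finset.univ) (w := margY P)
    (p := fun y ↦ (r - 1) * shannonEntropy fun x ↦ P (x, y) / margY P y)
    (fun y _ ↦ margY_nonneg hP y) ((sum_margY P).trans hP1) (fun y _ ↦ Set.mem_univ _)
  simp only [smul_eq_mul, mul_left_comm _ (r - 1), ← Finset.mul_sum] at jensen
  rw [condEnt_eq_sum_margY_mul_shannonEntropy hP]
  exact jensen.trans (Finset.sum_le_sum fun y _ ↦ margY_mul_exp_le_recipLpNorm hP hr y)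

theorem sumRecipLpNorm_pos (hP : ∀ q, 0 ≤ P q) (hP1 : ∑ q, P q = 1) (hr : 0 < r) :
    0 < sumRecipLpNorm P r :=
  (exp_pos _).trans_le (exp_mul_condEnt_le_sumRecipLpNorm hP hP1 hr)

theorem convexOn_log_sumRecipLpNorm (hP : ∀ q, 0 ≤ P q) (hP1 : ∑ q, P q = 1) :
    ConvexOn ℝ (Set.Ioi 0) fun r ↦ log (sumRecipLpNorm P r) :=
  convexOn_log_of_le_rpow_mul_rpow (convex_Ioi 0) (fun _ hr ↦ sumRecipLpNorm_pos hP hP1 hr)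
    fun _ hs _ ht _ _ ha hb hab ↦ sumRecipLpNorm_add_le hP ha hb hab hs ht

theorem mul_condEnt_le_log_sumRecipLpNorm (hP : ∀ q, 0 ≤ P q) (hP1 : ∑ q, P q = 1) (hr : 0 < r) :
    (r - 1) * condEnt P ≤ log (sumRecipLpNorm P r) :=
  (le_log_iff_exp_le (sumRecipLpNorm_pos hP hP1 hr)).2
    (exp_mul_condEnt_le_sumRecipLpNorm hP hP1 hr)

theorem condRenyiUp_eq_slope (hP1 : ∑ q, P q = 1) {θ : ℝ} (hθ : 1 + θ ≠ 0) :
    condRenyiUp P θ = slope (fun r ↦ log (sumRecipLpNorm P r)) 1 (1 + θ)⁻¹ := by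
  have hcoeff : (1 + θ)⁻¹ - 1 = -(θ / (1 + θ)) := by
    field_simp
    ring
  rw [slope_def_field, sumRecipLpNorm_one, hP1, log_one, sub_zero, hcoeff, div_neg,
    div_div_eq_mul_div]
  simp only [condRenyiUp, sumRecipLpNorm, recipLpNorm, inv_inv, one_div]
  ring

end JointDistribution

theorem condRenyiUp_antitone {𝒳 𝒴 : Type*} [Fintype 𝒳] [Fintype 𝒴]
    (P : 𝒳 × 𝒴 → ℝ) (hP0 : ∀ p, 0 ≤ P p) (hP1 : ∑ p : 𝒳 × 𝒴, P p = 1) :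
    AntitoneOn (fun θ : ℝ => if θ = 0 then condEnt P else condRenyiUp P θ)
      (Set.Ioi (-1 : ℝ)) := by
  have one_add_pos : ∀ {θ : ℝ}, θ ∈ Set.Ioi (-1 : ℝ) → 0 < 1 + θ :=
    fun hθ ↦ neg_lt_iff_pos_add'.1 hθ
  have slope_mono : MonotoneOn
      (Function.update (slope (fun r ↦ log (sumRecipLpNorm P r)) 1) 1 (condEnt P)) (Set.Ioi 0) := by
    refine monotoneOn_update_slope_of_convexOn (convexOn_log_sumRecipLpNorm hP0 hP1)
      (Set.mem_Ioi.2 one_pos) fun r hr ↦ ?_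
    rw [sumRecipLpNorm_one, hP1, log_one, zero_add, mul_comm]
    exact mul_condEnt_le_log_sumRecipLpNorm hP0 hP1 hr
  have inv_anti : AntitoneOn (fun θ : ℝ ↦ (1 + θ)⁻¹) (Set.Ioi (-1)) :=
    fun _ hθ _ _ h ↦ inv_anti₀ (one_add_pos hθ) (by gcongr)
  have comp_anti := slope_mono.comp_AntitoneOn inv_anti fun θ hθ ↦ inv_pos.2 (one_add_pos hθ)
  refine comp_anti.congr fun θ hθ ↦ ?_
  rcases eq_or_ne θ 0 with rfl | hθ0
  · simp
  · simp [hθ0, condRenyiUp_eq_slope hP1 (one_add_pos hθ).ne']
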